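/- Let G be a group of orientation-preserving homeomorphisms of ℝ satisfying f(x+1) = f(x)+1 for all x, and let G₀ be the subgroup of G generated by the space-like elements of G (those elements having a fixed point in ℝ). Then either G₀ = G, or there exists a point x ∈ ℝ fixed by every element of G₀; in the latter case every element of G₀ is space-like. -/

import Mathlib

/-!
Suppose some `g ∈ G` is not in `G₀`. Then `g` has no fixed point, so, replacing `g` by `g⁻¹` if
necessary, `g y > y` for all `y`. The key point (`lt_of_mem_closure`) is that then `h y < g y` for
all `h ∈ G₀` and all `y`. This goes by induction on the length of `h` as a word in space-like
elements: if `h < g` and `s` is space-like, then `s h` and `g` never agree (otherwise `(s h)⁻¹ g`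
would be space-like and `g` would be in `G₀`), so by continuity `s h < g` or `s h > g` everywhere;
in the latter case `s h > g > h`, so `s` has no fixed point, a contradiction.
Hence the `G₀`-orbit of `0` is bounded above by `g 0`, and its supremum is fixed by `G₀`.
-/

/-- Two continuous functions on `ℝ` that agree nowhere are ordered the same way everywhere. -/
lemma forall_lt_or_forall_gt {f g : ℝ → ℝ} (hf : Continuous f) (hg : Continuous g)
    (hne : ∀ x, f x ≠ g x) : (∀ x, f x < g x) ∨ (∀ x, g x < f x) := by
  by_contra! hcon
  obtain ⟨⟨a, ha⟩, ⟨b, hb⟩⟩ := hcon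
  obtain ⟨c, hc⟩ := mem_range_of_exists_le_of_exists_ge (hf.sub hg)
    ⟨b, sub_nonpos.2 hb⟩ ⟨a, sub_nonneg.2 ha⟩
  exact hne c (sub_eq_zero.1 hc)

/-- Inductive step of `lt_of_mem_closure`: multiplying by a space-like `s` does not jump over an
element `g` outside `G₀`. -/
lemma spacelike_mul_lt {G : Subgroup (Equiv.Perm ℝ)} (hcont : ∀ g ∈ G, Continuous ⇑g)
    {g s h : Equiv.Perm ℝ} (hg : g ∈ G)
    (hgn : g ∉ Subgroup.closure {g : Equiv.Perm ℝ | g ∈ G ∧ ∃ x : ℝ, g x = x})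
    (hs : s ∈ Subgroup.closure {g : Equiv.Perm ℝ | g ∈ G ∧ ∃ x : ℝ, g x = x})
    (hsG : s ∈ G) (hsx : ∃ x : ℝ, s x = x)
    (hh : h ∈ Subgroup.closure {g : Equiv.Perm ℝ | g ∈ G ∧ ∃ x : ℝ, g x = x})
    (hhG : h ∈ G) (hlt : ∀ y, h y < g y) (y : ℝ) : (s * h) y < g y := by
  have hshG : s * h ∈ G := G.mul_mem hsG hhG
  have hne : ∀ x, (s * h) x ≠ g x := by
    intro x hx
    have hmem : (s * h)⁻¹ * g ∈
        Subgroup.closure {g : Equiv.Perm ℝ | g ∈ G ∧ ∃ x : ℝ, g x = x} := by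
      refine Subgroup.subset_closure ⟨G.mul_mem (G.inv_mem hshG) hg, x, ?_⟩
      rw [Equiv.Perm.mul_apply, ← hx, Equiv.Perm.inv_def, Equiv.symm_apply_apply]
    apply hgn
    simpa only [mul_inv_cancel_left] using Subgroup.mul_mem _ (Subgroup.mul_mem _ hs hh) hmem
  rcases forall_lt_or_forall_gt (hcont _ hshG) (hcont _ hg) hne with H | H
  · exact H y
  · obtain ⟨p, hp⟩ := hsx
    have h1 := (hlt (h⁻¹ p)).trans (H (h⁻¹ p))
    rw [Equiv.Perm.mul_apply, Equiv.Perm.inv_def, Equiv.apply_symm_apply, hp] at h1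
    exact absurd h1 (lt_irrefl _)

/-- An element of `G` outside `G₀` that lies above the identity lies above all of `G₀`. -/
lemma lt_of_mem_closure {G : Subgroup (Equiv.Perm ℝ)} (hcont : ∀ g ∈ G, Continuous ⇑g)
    {g : Equiv.Perm ℝ} (hg : g ∈ G)
    (hgn : g ∉ Subgroup.closure {g : Equiv.Perm ℝ | g ∈ G ∧ ∃ x : ℝ, g x = x})
    (hpos : ∀ y, y < g y) {h : Equiv.Perm ℝ}
    (hh : h ∈ Subgroup.closure {g : Equiv.Perm ℝ | g ∈ G ∧ ∃ x : ℝ, g x = x}) :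
    ∀ y, h y < g y := by
  have hle : Subgroup.closure {g : Equiv.Perm ℝ | g ∈ G ∧ ∃ x : ℝ, g x = x} ≤ G :=
    (Subgroup.closure_le _).2 fun _ hx => hx.1
  induction hh using Subgroup.closure_induction_left with
  | one => simpa using hpos
  | mul_left s hs h hh ih =>
    exact spacelike_mul_lt hcont hg hgn (Subgroup.subset_closure hs) hs.1 hs.2 hh (hle hh) ih
  | inv_mul_cancel s hs h hh ih =>
    obtain ⟨x, hx⟩ := hs.2
    exact spacelike_mul_lt hcont hg hgn (Subgroup.inv_mem _ (Subgroup.subset_closure hs))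
      (G.inv_mem hs.1) ⟨x, Equiv.Perm.inv_eq_iff_eq.2 hx.symm⟩ hh (hle hh) ih

/-- The supremum of an orbit that is bounded above is a global fixed point. -/
lemma exists_fixed_of_bddAbove (H : Subgroup (Equiv.Perm ℝ))
    (hmono : ∀ h ∈ H, StrictMono ⇑h) (b : ℝ) (hb : ∀ h ∈ H, h 0 ≤ b) :
    ∃ x : ℝ, ∀ h ∈ H, h x = x := by
  let S : Set ℝ := {y | ∃ h ∈ H, h 0 = y}
  have hbdd : BddAbove S := ⟨b, by rintro _ ⟨h, hh, rfl⟩; exact hb h hh⟩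
  have hne : S.Nonempty := ⟨0, 1, H.one_mem, rfl⟩
  have key : ∀ k ∈ H, sSup S ≤ k (sSup S) := by
    intro k hk
    refine csSup_le hne ?_
    rintro _ ⟨h, hh, rfl⟩
    have h1 : (k⁻¹ * h) 0 ≤ sSup S := le_csSup hbdd ⟨_, H.mul_mem (H.inv_mem hk) hh, rfl⟩
    have h2 := (hmono k hk).monotone h1
    rwa [Equiv.Perm.mul_apply, Equiv.Perm.inv_def, Equiv.apply_symm_apply] at h2
  refine ⟨sSup S, fun k hk => le_antisymm ?_ (key k hk)⟩
  have h2 := (hmono k hk).monotone (key k⁻¹ (H.inv_mem hk))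
  rwa [Equiv.Perm.inv_def, Equiv.apply_symm_apply] at h2


/-- Let `G` be a group of lifts of orientation-preserving circle
homeomorphisms and `G₀` the subgroup generated by the space-like elements of `G` (those
with a fixed point).  Then either `G₀ = G`, or `G₀` has a global fixed point — in which
case every element of `G₀` is space-like. -/
theorem spacelike_generate_or_common_fixed_point
    (G : Subgroup (Equiv.Perm ℝ))
    (hmono : ∀ g ∈ G, StrictMono ⇑g) (hcont : ∀ g ∈ G, Continuous ⇑g)
    (hper : ∀ g ∈ G, ∀ x : ℝ, g (x + 1) = g x + 1) :
    Subgroup.closure {g : Equiv.Perm ℝ | g ∈ G ∧ ∃ x : ℝ, g x = x} = G ∨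
      ((∃ x : ℝ, ∀ g ∈ Subgroup.closure {g : Equiv.Perm ℝ | g ∈ G ∧ ∃ x : ℝ, g x = x},
          g x = x) ∧
        ∀ g ∈ Subgroup.closure {g : Equiv.Perm ℝ | g ∈ G ∧ ∃ x : ℝ, g x = x},
          ∃ x : ℝ, g x = x) := by
  have hle : Subgroup.closure {g : Equiv.Perm ℝ | g ∈ G ∧ ∃ x : ℝ, g x = x} ≤ G :=
    (Subgroup.closure_le _).2 fun _ hx => hx.1
  by_cases hGe : Subgroup.closure {g : Equiv.Perm ℝ | g ∈ G ∧ ∃ x : ℝ, g x = x} = G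
  · exact Or.inl hGe
  right
  obtain ⟨g, hg, hgn, hpos⟩ : ∃ g ∈ G,
      g ∉ Subgroup.closure {g : Equiv.Perm ℝ | g ∈ G ∧ ∃ x : ℝ, g x = x} ∧ ∀ y, y < g y := by
    obtain ⟨g, hg, hgn⟩ := SetLike.not_le_iff_exists.1 fun h => hGe (le_antisymm hle h)
    have hne : ∀ x, id x ≠ g x := fun x hx => hgn (Subgroup.subset_closure ⟨hg, x, hx.symm⟩)
    rcases forall_lt_or_forall_gt continuous_id (hcont g hg) hne with H | H
    · exact ⟨g, hg, hgn, H⟩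
    · refine ⟨g⁻¹, G.inv_mem hg, fun h => hgn (Subgroup.inv_mem_iff _ |>.1 h), fun y => ?_⟩
      have h1 := H (g⁻¹ y)
      rwa [Equiv.Perm.inv_def, Equiv.apply_symm_apply] at h1
  obtain ⟨x, hx⟩ := exists_fixed_of_bddAbove _ (fun h hh => hmono h (hle hh)) (g 0)
    fun h hh => (lt_of_mem_closure hcont hg hgn hpos hh 0).le
  exact ⟨⟨x, hx⟩, fun k hk => ⟨x, hx k hk⟩⟩
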